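/- Let V be a finite free R-module and A ∈ End_R(V) with characteristic polynomial ∏_{i=1}^m (T − λ_i)^{q_i}, where λ_1,…,λ_m ∈ R, and assume each λ_i and each difference λ_i − λ_j (i ≠ j) is invertible in R. Then V = ⊕_{i=1}^m ker(A − λ_i·id)^{q_i}, and there exists a polynomial p(T) ∈ R[T] with p(T) ≡ λ_i mod (T − λ_i)^{q_i} for every i and p(T) ≡ 0 mod T; setting A_s = p(A) and A_n = A − A_s, the endomorphism A_s restricts to λ_i·id on ker(A − λ_i·id)^{q_i} for each i, A_n is nilpotent, and A_s∘A_n = A_n∘A_s. -/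

import Mathlib

noncomputable section

/-!
The unit hypotheses make the polynomials `T` and `(T - λᵢ)^{qᵢ}` pairwise coprime in `R[T]`.
By Cayley-Hamilton the product of the `(T - λᵢ)^{qᵢ}` annihilates `A`, so `V` splits as the direct
sum of their kernels (`isInternal_ker_aeval`), and the Chinese remainder theorem yields `p`.
The restriction of `p(A)` to a kernel is read off from the congruence. Finally `T - p` is
divisible by `T - λᵢ` whenever `qᵢ > 0`, so a power of `T - p` is divisible by the characteristic
polynomial, which gives nilpotency of `A - p(A)`.
-/

namespace JordanDecomposition

open Polynomial

variable {R M ι : Type*} [CommRing R] [AddCommGroup M] [Module R M]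

lemma ker_aeval_mono_of_dvd (A : M →ₗ[R] M) {f g : R[X]} (h : f ∣ g) :
    LinearMap.ker (aeval A f) ≤ LinearMap.ker (aeval A g) := by
  obtain ⟨c, rfl⟩ := h
  intro v hv
  rw [LinearMap.mem_ker] at hv ⊢
  rw [mul_comm, map_mul, Module.End.mul_apply, hv, map_zero]

lemma ker_aeval_prod_le (A : M →ₗ[R] M) (f : ι → R[X])
    (hf : Pairwise fun i j => IsCoprime (f i) (f j)) (s : Finset ι) :
    LinearMap.ker (aeval A (∏ i ∈ s, f i)) ≤ ⨆ i, LinearMap.ker (aeval A (f i)) := by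
  classical
  induction s using Finset.induction_on with
  | empty => simp [Module.End.one_eq_id]
  | insert a s ha ih =>
    rw [Finset.prod_insert ha, ← sup_ker_aeval_eq_ker_aeval_mul_of_coprime]
    · exact sup_le (le_iSup (fun i => LinearMap.ker (aeval A (f i))) a) ih
    · exact IsCoprime.prod_right fun j hj => hf fun h => ha (h ▸ hj)

/-- Primary decomposition over a commutative ring: if a product of pairwise coprime polynomials
annihilates `A`, the module is the direct sum of the kernels of the factors at `A`. -/
lemma isInternal_ker_aeval [Fintype ι] [DecidableEq ι] (A : M →ₗ[R] M) (f : ι → R[X])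
    (hf : Pairwise fun i j => IsCoprime (f i) (f j)) (h0 : aeval A (∏ i, f i) = 0) :
    DirectSum.IsInternal fun i => LinearMap.ker (aeval A (f i)) := by
  rw [DirectSum.isInternal_submodule_iff_iSupIndep_and_iSup_eq_top]
  constructor
  · intro i
    have hc : IsCoprime (f i) (∏ j ∈ Finset.univ.erase i, f j) :=
      IsCoprime.prod_right fun j hj => hf (Finset.ne_of_mem_erase hj).symm
    refine (disjoint_ker_aeval_of_isCoprime A hc).mono_right (iSup₂_le fun j hj => ?_)
    exact ker_aeval_mono_of_dvd A
      (Finset.dvd_prod_of_mem f (Finset.mem_erase.2 ⟨hj, Finset.mem_univ j⟩))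
  · rw [eq_top_iff]
    refine le_trans ?_ (ker_aeval_prod_le A f hf Finset.univ)
    rw [h0, LinearMap.ker_zero]

lemma isCoprime_X_sub_C_of_isUnit {a b : R} (h : IsUnit (a - b)) :
    IsCoprime (X - C a) (X - C b) := by
  obtain ⟨u, hu⟩ := h
  refine ⟨-C (↑u⁻¹ : R), C (↑u⁻¹ : R), ?_⟩
  have h1 : C (↑u⁻¹ : R) * (C a - C b) = 1 := by
    rw [← C_sub, ← hu, ← C_mul, Units.inv_mul, C_1]
  linear_combination h1

/-- The Chinese remainder theorem for `T` and the `(T - λᵢ)^{qᵢ}`. -/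
lemma exists_jordan_polynomial [Finite ι] (lam : ι → R) (q : ι → ℕ)
    (hunit : ∀ i, IsUnit (lam i))
    (hf : Pairwise fun i j => IsCoprime ((X - C (lam i)) ^ q i) ((X - C (lam j)) ^ q j)) :
    ∃ p : R[X], (∀ i, (X - C (lam i)) ^ q i ∣ p - C (lam i)) ∧ X ∣ p := by
  -- The index `none` carries the modulus `X` with residue `0`.
  let g : Option ι → R[X] := fun o => o.elim X fun i => (X - C (lam i)) ^ q i
  have hX : ∀ i, IsCoprime X ((X - C (lam i)) ^ q i) := fun i => by
    have h := isCoprime_X_sub_C_of_isUnit (a := 0) (b := lam i) (by simpa using hunit i)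
    rw [C_0, sub_zero] at h
    exact h.pow_right
  have hg : Pairwise fun a b => IsCoprime (Ideal.span {g a}) (Ideal.span {g b}) := by
    intro a b hab
    rw [Ideal.isCoprime_span_singleton_iff]
    match a, b with
    | none, none => exact absurd rfl hab
    | none, some j => exact hX j
    | some i, none => exact (hX i).symm
    | some i, some j => exact hf fun h => hab (congrArg some h)
  obtain ⟨p, hp⟩ := Ideal.exists_forall_sub_mem_ideal hg
    (fun o => o.elim 0 fun i => C (lam i))
  refine ⟨p, fun i => Ideal.mem_span_singleton.1 (hp (some i)), ?_⟩
  simpa [g] using Ideal.mem_span_singleton.1 (hp none)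

end JordanDecomposition

/-- Let `R = C⟦t⟧`, `V` a finite free `R`-module and `A ∈ End_R(V)`
with characteristic polynomial `∏ᵢ (T - λᵢ)^{qᵢ}`, `λᵢ ∈ R`, such that each `λᵢ` and each
difference `λᵢ - λⱼ` (`i ≠ j`) is invertible in `R`.  Then `V = ⊕ᵢ ker (A - λᵢ)^{qᵢ}`, and
there is `p(T) ∈ R[T]` with `p ≡ λᵢ mod (T - λᵢ)^{qᵢ}` for all `i` and `p ≡ 0 mod T`;
setting `A_s = p(A)` and `A_n = A - A_s`, the map `A_s` restricts to `λᵢ·id` on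
`ker (A - λᵢ)^{qᵢ}`, `A_n` is nilpotent, and `A_s` and `A_n` commute. -/
theorem stmt_14 (C : Type) [Field C] [CharZero C] [IsAlgClosed C]
    (V : Type) [AddCommGroup V] [Module (PowerSeries C) V]
    [Module.Finite (PowerSeries C) V] [Module.Free (PowerSeries C) V]
    (A : V →ₗ[PowerSeries C] V)
    (m : ℕ) (lam : Fin m → PowerSeries C) (q : Fin m → ℕ)
    (hchar : LinearMap.charpoly A = ∏ i, (Polynomial.X - Polynomial.C (lam i)) ^ q i)
    (hunit : ∀ i, IsUnit (lam i))
    (hdiff : ∀ i j, i ≠ j → IsUnit (lam i - lam j)) :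
    DirectSum.IsInternal
      (fun i : Fin m => LinearMap.ker ((A - lam i • LinearMap.id) ^ q i)) ∧
    ∃ p : Polynomial (PowerSeries C),
      (∀ i, (Polynomial.X - Polynomial.C (lam i)) ^ q i ∣ (p - Polynomial.C (lam i))) ∧
      (Polynomial.X : Polynomial (PowerSeries C)) ∣ p ∧
      (∀ i, ∀ v ∈ LinearMap.ker ((A - lam i • LinearMap.id) ^ q i),
        Polynomial.aeval A p v = lam i • v) ∧
      IsNilpotent (A - Polynomial.aeval A p) ∧
      Commute (Polynomial.aeval A p) (A - Polynomial.aeval A p) := by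
  classical
  have hf : Pairwise fun i j => IsCoprime ((Polynomial.X - Polynomial.C (lam i)) ^ q i)
      ((Polynomial.X - Polynomial.C (lam j)) ^ q j) := fun i j hij =>
    (JordanDecomposition.isCoprime_X_sub_C_of_isUnit (hdiff i j hij)).pow
  have h0 : Polynomial.aeval A (∏ i, (Polynomial.X - Polynomial.C (lam i)) ^ q i) = 0 := by
    rw [← hchar, LinearMap.aeval_self_charpoly]
  have hA : ∀ i, (A - lam i • LinearMap.id) ^ q i =
      Polynomial.aeval A ((Polynomial.X - Polynomial.C (lam i)) ^ q i) := fun i => by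
    rw [map_pow, map_sub, Polynomial.aeval_X, Polynomial.aeval_C,
      Algebra.algebraMap_eq_smul_one, Module.End.one_eq_id]
  simp only [hA]
  refine ⟨JordanDecomposition.isInternal_ker_aeval A _ hf h0, ?_⟩
  obtain ⟨p, hp, hpX⟩ := JordanDecomposition.exists_jordan_polynomial lam q hunit hf
  refine ⟨p, hp, hpX, fun i v hv => ?_, ?_, ?_⟩
  · have h := JordanDecomposition.ker_aeval_mono_of_dvd A (hp i) hv
    rw [LinearMap.mem_ker, map_sub, LinearMap.sub_apply, sub_eq_zero] at h
    rw [h, Polynomial.aeval_C, Module.algebraMap_end_apply]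
  · refine ⟨∑ i, q i, ?_⟩
    have hdvd : ∏ i, (Polynomial.X - Polynomial.C (lam i)) ^ q i ∣
        (Polynomial.X - p) ^ ∑ i, q i := by
      refine Finset.prod_dvd_of_coprime (fun i _ j _ hij => hf hij) fun i _ => ?_
      rcases Nat.eq_zero_or_pos (q i) with hq | hq
      · rw [hq, pow_zero]
        exact one_dvd _
      · have h1 : Polynomial.X - Polynomial.C (lam i) ∣ Polynomial.X - p := by
          have h2 := dvd_sub (dvd_refl (Polynomial.X - Polynomial.C (lam i)))
            ((dvd_pow_self _ hq.ne').trans (hp i))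
          rwa [sub_sub_sub_cancel_right] at h2
        exact (pow_dvd_pow_of_dvd h1 _).trans
          (pow_dvd_pow _ (Finset.single_le_sum (fun _ _ => Nat.zero_le _) (Finset.mem_univ i)))
    obtain ⟨c, hc⟩ := hdvd
    have h := congrArg (Polynomial.aeval A) hc
    rwa [map_mul, h0, zero_mul, map_pow, map_sub, Polynomial.aeval_X] at h
  · have hcomm : Commute (Polynomial.aeval A p) A := by
      simpa only [Polynomial.aeval_X] using
        (Commute.all p Polynomial.X).map (Polynomial.aeval A)
    exact hcomm.sub_right (Commute.refl _)
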